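/- Let $V$ be a finite type and $r : V \to V \to \mathrm{Prop}$ (with decidable values) an acyclic directed graph containing a covered edge $i \to j$: $r\,i\,j$ holds and for all $k$, $r\,k\,j \leftrightarrow (r\,k\,i \lor k = i)$. Let $r'$ be the graph obtained by reversing the edge $i \to j$. Denote by $d(v)$ and $d'(v)$ the indegrees of $v$ in $r$ and $r'$ (the number of vertices $k$ with an edge $k \to v$). Then $d'(i) = d(j)$, $d'(j) = d(i)$, and $d'(v) = d(v)$ for all $v \notin \{i,j\}$; consequently, the multiset of node indegrees of $r'$ equals the multiset of node indegrees of $r$. -/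

import Mathlib

/-!
Covering means that `pa(j)` is `pa(i)` with `i` added. The reversal turns `pa(i)` into
`pa(i) ∪ {j}` and `pa(j)` into `pa(i)`. By acyclicity neither `i` nor `j` lies in `pa(i)`, so both
insertions raise the cardinality by one, and the new indegrees are the old ones read through the
transposition of `i` and `j`.
-/

section CoveredEdge

variable {V : Type*} {r : V → V → Prop} {i j v : V}

/-- The parent set `pa(v)` of `v` in the directed graph whose edges are `k → v` for `r k v`. -/
def parents (r : V → V → Prop) (v : V) : Set V := {k | r k v}

theorem mem_parents {k : V} : k ∈ parents r v ↔ r k v := Iff.rfl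

/-- The indegree of `v`: a cardinal, so that it is meaningful on infinite graphs as well. -/
noncomputable def indegree (r : V → V → Prop) (v : V) : Cardinal := Cardinal.mk (parents r v)

/-- The edge `i → j` is covered: `pa(j) = pa(i) ∪ {i}`. This already forces the edge `i → j` to be
present, so `r i j` is not a separate clause. -/
def IsCoveredEdge (r : V → V → Prop) (i j : V) : Prop := parents r j = insert i (parents r i)

/-- The graph obtained from `r` by removing the edge `i → j` and adding `j → i`; it is the reversal
of `i → j` when `r i j` holds. -/
def reverseEdge (r : V → V → Prop) (i j a b : V) : Prop :=
  (r a b ∧ ¬ (a = i ∧ b = j)) ∨ (a = j ∧ b = i)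

theorem parents_reverseEdge_source (r : V → V → Prop) (i j : V) :
    parents (reverseEdge r i j) i = insert j (parents r i) := by
  ext k
  simp only [mem_parents, reverseEdge, Set.mem_insert_iff]
  grind

theorem parents_reverseEdge_target_of_ne (hne : i ≠ j) :
    parents (reverseEdge r i j) j = parents r j \ {i} := by
  ext k
  simp [mem_parents, reverseEdge, hne.symm]

theorem parents_reverseEdge_of_ne (hi : v ≠ i) (hj : v ≠ j) :
    parents (reverseEdge r i j) v = parents r v := by
  ext k
  simp [mem_parents, reverseEdge, hi, hj]

namespace IsCoveredEdge

theorem ne (h : IsCoveredEdge r i j) (hii : ¬ r i i) : i ≠ j := by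
  rintro rfl
  exact hii (h.ge (Set.mem_insert i _))

theorem indegree_reverseEdge_source (h : IsCoveredEdge r i j) (hii : ¬ r i i) (hji : ¬ r j i) :
    indegree (reverseEdge r i j) i = indegree r j :=
  calc Cardinal.mk (parents (reverseEdge r i j) i)
    _ = Cardinal.mk (insert j (parents r i) : Set V) := by rw [parents_reverseEdge_source]
    _ = Cardinal.mk (parents r i) + 1 := Cardinal.mk_insert (mt mem_parents.mp hji)
    _ = Cardinal.mk (insert i (parents r i) : Set V) :=
      (Cardinal.mk_insert (mt mem_parents.mp hii)).symm
    _ = Cardinal.mk (parents r j) := by rw [h]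

theorem indegree_reverseEdge_target (h : IsCoveredEdge r i j) (hii : ¬ r i i) :
    indegree (reverseEdge r i j) j = indegree r i := by
  have hparents : parents (reverseEdge r i j) j = parents r i :=
    calc parents (reverseEdge r i j) j
      _ = parents r j \ {i} := parents_reverseEdge_target_of_ne (h.ne hii)
      _ = insert i (parents r i) \ {i} := by rw [h]
      _ = parents r i := Set.insert_sdiff_self_of_notMem (mt mem_parents.mp hii)
  rw [indegree, hparents, indegree]

end IsCoveredEdge

theorem covered_edge_reversal_indegrees_general [DecidableEq V] (h : IsCoveredEdge r i j)
    (hii : ¬ r i i) (hji : ¬ r j i) (v : V) :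
    indegree (reverseEdge r i j) v = indegree r (Equiv.swap i j v) := by
  obtain rfl | hi := eq_or_ne v i
  · rw [Equiv.swap_apply_left, h.indegree_reverseEdge_source hii hji]
  obtain rfl | hj := eq_or_ne v j
  · rw [Equiv.swap_apply_right, h.indegree_reverseEdge_target hii]
  · rw [Equiv.swap_apply_of_ne_of_ne hi hj, indegree, parents_reverseEdge_of_ne hi hj, indegree]

theorem indegree_eq_card_filter [Fintype V] (r : V → V → Prop) [DecidableRel r] (v : V) :
    indegree r v = (Finset.univ.filter (fun k => r k v)).card := by
  rw [← Fintype.card_subtype]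
  exact Cardinal.mk_fintype {k // r k v}

end CoveredEdge

theorem map_univ_val_comp_equiv {α β γ : Type*} [Fintype α] [Fintype β] (f : β → γ) (e : α ≃ β) :
    Finset.univ.val.map (f ∘ e) = Finset.univ.val.map f := by
  rw [← Multiset.map_map, Multiset.map_univ_val_equiv]

/-- Reversing a covered edge `i → j` of an acyclic directed graph swaps the
indegrees of `i` and `j` and leaves all other indegrees unchanged; hence the
multiset of node indegrees is preserved. -/
theorem covered_edge_reversal_indegrees {V : Type*} [Fintype V] [DecidableEq V]
    (r : V → V → Prop) [DecidableRel r]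
    (hacyc : ∀ v, ¬ Relation.TransGen r v v)
    (i j : V) (hij : r i j)
    (hcov : ∀ k, r k j ↔ (r k i ∨ k = i))
    (r' : V → V → Prop) [DecidableRel r']
    (hr' : ∀ a b, r' a b ↔ ((r a b ∧ ¬ (a = i ∧ b = j)) ∨ (a = j ∧ b = i)))
    (d d' : V → ℕ)
    (hd : ∀ v, d v = (Finset.univ.filter (fun k => r k v)).card)
    (hd' : ∀ v, d' v = (Finset.univ.filter (fun k => r' k v)).card) :
    d' i = d j ∧ d' j = d i ∧ (∀ v, v ≠ i → v ≠ j → d' v = d v)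
      ∧ Finset.univ.val.map d' = Finset.univ.val.map d := by
  have hcovered : IsCoveredEdge r i j := Set.ext fun k => (hcov k).trans or_comm
  have hii : ¬ r i i := fun h => hacyc i (.single h)
  have hji : ¬ r j i := fun h => hacyc i (.tail (.single hij) h)
  obtain rfl : r' = reverseEdge r i j := funext₂ fun a b => propext (hr' a b)
  have hswap : d' = d ∘ Equiv.swap i j := funext fun v => Nat.cast_injective (R := Cardinal) <| by
    rw [Function.comp_apply, hd, hd', ← indegree_eq_card_filter, ← indegree_eq_card_filter,
      covered_edge_reversal_indegrees_general hcovered hii hji]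
  subst hswap
  exact ⟨congrArg d (Equiv.swap_apply_left i j), congrArg d (Equiv.swap_apply_right i j),
    fun v hi hj => congrArg d (Equiv.swap_apply_of_ne_of_ne hi hj),
    map_univ_val_comp_equiv d (Equiv.swap i j)⟩
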